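/- Let n ≥ 2, let M be a closed connected topological n-manifold, and let f : M → M be a regular homeomorphism. Let O_1, …, O_k be an enumeration of all periodic orbits of f such that whenever l ≠ j and W^u_{O_j} ∩ W^s_{O_l} ≠ ∅ one has l < j, and for 1 ≤ j ≤ k−1 set A_j = ⋃_{l=1}^{j} W^u_{O_l} and R_j = ⋃_{l=j+1}^{k} W^s_{O_l}. Then (1) R_j is a repeller of f (an attractor of f⁻¹), and (2) if every periodic point belonging to one of the orbits O_{j+1}, …, O_k has Morse index at least 2, then A_j is connected. -/

import Mathlib

open Filter Topology

/-- `M` is a topological `n`-manifold without boundary: every point has an open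
neighbourhood homeomorphic to `ℝⁿ`. -/
def IsChartedEuclidean (n : ℕ) (M : Type*) [TopologicalSpace M] : Prop :=
  ∀ x : M, ∃ U : Set M, IsOpen U ∧ x ∈ U ∧ Nonempty (U ≃ₜ EuclideanSpace ℝ (Fin n))

/-- An `ε`-chain of the map `f` from `x` to `y`. -/
def IsEpsChain {M : Type*} [PseudoMetricSpace M] (f : M → M) (ε : ℝ) (x y : M) : Prop :=
  ∃ k : ℕ, 0 < k ∧ ∃ (c : Fin (k + 1) → M) (m : Fin k → ℕ),
    c 0 = x ∧ c (Fin.last k) = y ∧ (∀ i, 1 ≤ m i) ∧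
    ∀ i : Fin k, dist (f^[m i] (c i.castSucc)) (c i.succ) < ε

/-- A point is chain recurrent for `f` if for every `ε > 0` there is an `ε`-chain
from the point to itself. -/
def ChainRecurrent {M : Type*} [PseudoMetricSpace M] (f : M → M) (x : M) : Prop :=
  ∀ ε : ℝ, 0 < ε → IsEpsChain f ε x x

/-- The chain recurrent set of `f`. -/
def chainRecurrentSet {M : Type*} [PseudoMetricSpace M] (f : M → M) : Set M :=
  {x | ChainRecurrent f x}

/-- The canonical hyperbolic model map `a_{i,δu,δs} : ℝⁿ → ℝⁿ`,
`a(x₁,…,xₙ) = (2δu·x₁, 2x₂, …, 2x_i, (δs/2)·x_{i+1}, x_{i+2}/2, …, xₙ/2)`. -/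
noncomputable def modelMap (n i : ℕ) (δu δs : ℝ) :
    EuclideanSpace ℝ (Fin n) → EuclideanSpace ℝ (Fin n) :=
  fun x => WithLp.toLp 2 fun j : Fin n =>
    if (j : ℕ) < i then (if (j : ℕ) = 0 then 2 * δu else 2) * x j
    else (if (j : ℕ) = i then δs / 2 else 1 / 2) * x j

/-- A point `p` is a topologically hyperbolic periodic point of the homeomorphism `f`
with Morse index `i`: `p` is periodic of some least period `m` and `f^m` is conjugate,
in a neighbourhood of `p`, to the model map `a_{i,δu,δs}` on `ℝⁿ`. -/
def TopHyperbolic {M : Type*} [MetricSpace M] (n : ℕ) (f : M ≃ₜ M) (p : M) (i : ℕ) : Prop :=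
  ∃ m : ℕ, 0 < m ∧ Function.IsPeriodicPt (⇑f) m p ∧ Function.minimalPeriod (⇑f) p = m ∧
    ∃ δu δs : ℝ, (δu = 1 ∨ δu = -1) ∧ (δs = 1 ∨ δs = -1) ∧
      ∃ (U : Set M) (_ : IsOpen U) (_ : p ∈ U) (h : U ≃ₜ EuclideanSpace ℝ (Fin n)),
        ∀ x : U, (⇑f)^[m] (x : M) = ((h.symm (modelMap n i δu δs (h x)) : U) : M)

/-- A homeomorphism is regular if its chain recurrent set is finite and consists of
topologically hyperbolic periodic points (of some Morse index `i ∈ {0,…,n}`). -/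
def RegularHomeo {M : Type*} [MetricSpace M] (n : ℕ) (f : M ≃ₜ M) : Prop :=
  (chainRecurrentSet (⇑f)).Finite ∧
    ∀ p ∈ chainRecurrentSet (⇑f), ∃ i ≤ n, TopHyperbolic n f p i

/-- The stable manifold `W^s_p = {q : f^{km}(q) → p, k → +∞}`, `m` the least period. -/
def stableSet {M : Type*} [MetricSpace M] (f : M ≃ₜ M) (p : M) : Set M :=
  {q | Tendsto (fun k : ℕ => (⇑f)^[k * Function.minimalPeriod (⇑f) p] q) atTop (𝓝 p)}

/-- The unstable manifold `W^u_p = {q : f^{-km}(q) → p, k → +∞}`, `m` the least period. -/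
def unstableSet {M : Type*} [MetricSpace M] (f : M ≃ₜ M) (p : M) : Set M :=
  {q | Tendsto (fun k : ℕ => (⇑f.symm)^[k * Function.minimalPeriod (⇑f) p] q) atTop (𝓝 p)}

/-- A saddle periodic point: topologically hyperbolic of Morse index `0 < i < n`. -/
def IsSaddlePt {M : Type*} [MetricSpace M] (n : ℕ) (f : M ≃ₜ M) (p : M) : Prop :=
  ∃ i, 0 < i ∧ i < n ∧ TopHyperbolic n f p i

/-- A subset `S ⊆ M` is a locally flat `k`-dimensional submanifold of the `n`-manifold
`M`: every `x ∈ S` has an open neighbourhood `U` and a homeomorphism `ψ : U ≃ₜ ℝⁿ` with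
`ψ(U ∩ S) = ℝᵏ × {0}`. -/
def IsLocallyFlatSubmanifold (n k : ℕ) {M : Type*} [TopologicalSpace M] (S : Set M) : Prop :=
  ∀ x ∈ S, ∃ U : Set M, IsOpen U ∧ x ∈ U ∧
    ∃ ψ : U ≃ₜ EuclideanSpace ℝ (Fin n),
      ψ '' {y : U | (y : M) ∈ S} = {y | ∀ j : Fin n, k ≤ (j : ℕ) → y j = 0}
/-- The orbit of a point `p` under the homeomorphism `f`. -/
def orbitOf {M : Type*} [MetricSpace M] (f : M ≃ₜ M) (p : M) : Set M :=
  {x | ∃ j : ℕ, (⇑f)^[j] p = x}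

/-!
A finite chain recurrent set consists of periodic points, and every orbit converges to one of these
periodic orbits in forward and in backward time. If a set `P` of periodic points is closed under
heteroclinic connections, it is closed under chain reachability: as `ε → 0`, the points
at which `ε`-chains last enter a neighbourhood of a minimal chain class accumulate at a heteroclinic
orbit. Hence the set of points reachable from `P` by `ε`-chains, for small `ε`, is a
trapping neighbourhood of the union `A` of the unstable manifolds of `P`; applied to `f⁻¹`, the same
argument makes the union `R` of the remaining stable manifolds a repeller.

The complement of `R` is the basin of `A`. When the indices are at least `2`, `R` is a closed
countable union of embedded linear subspaces of codimension at least two, and a Baire category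
argument shows that its complement is connected. Connectedness passes to `A`: the basin contains a
compact connected set around `A`, whose forward images shrink to `A`.
-/

/-! ### Chain reachability -/

section Iterates

variable {α X : Type*}

lemma exists_iterate_iterate_eq_of_mem_periodicPts {f : α → α} {p : α}
    (hp : p ∈ Function.periodicPts f) (t : ℕ) :
    ∃ r, f^[r] (f^[t] p) = p := by
  obtain ⟨m, hm, hp⟩ := hp
  refine ⟨m * t - t, ?_⟩
  rw [← Function.iterate_add_apply, Nat.sub_add_cancel (Nat.le_mul_of_pos_left t hm)]
  exact hp.mul_const t

lemma iterate_mem_periodicPts {f : α → α} {p : α}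
    (hp : p ∈ Function.periodicPts f) (t : ℕ) :
    f^[t] p ∈ Function.periodicPts f := by
  obtain ⟨m, hm, hp⟩ := hp
  exact ⟨m, hm, hp.apply_iterate t⟩

lemma mem_of_iterate_mem_of_mem_periodicPts {f : α → α} {p : α} {P : Set α}
    (hP : Set.MapsTo f P P) (hp : p ∈ Function.periodicPts f) {t : ℕ} (h : f^[t] p ∈ P) :
    p ∈ P := by
  obtain ⟨r, hr⟩ := exists_iterate_iterate_eq_of_mem_periodicPts hp t
  exact hr ▸ hP.iterate r h

variable [TopologicalSpace X]

lemma iterate_iterate_symm_apply (f : X ≃ₜ X) (t : ℕ) (x : X) : f^[t] (f.symm^[t] x) = x :=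
  Function.LeftInverse.iterate f.apply_symm_apply t x

lemma isPeriodicPt_symm_iff {f : X ≃ₜ X} {t : ℕ} {x : X} :
    Function.IsPeriodicPt f.symm t x ↔ Function.IsPeriodicPt f t x := by
  have flip : ∀ g : X ≃ₜ X, Function.IsPeriodicPt g.symm t x → Function.IsPeriodicPt g t x :=
    fun g hg => by
      have := iterate_iterate_symm_apply g t x
      rwa [hg.eq] at this
  exact ⟨flip f, flip f.symm⟩

lemma minimalPeriod_symm (f : X ≃ₜ X) (x : X) :
    Function.minimalPeriod f.symm x = Function.minimalPeriod f x :=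
  Function.minimalPeriod_eq_minimalPeriod_iff.2 fun _ => isPeriodicPt_symm_iff

lemma periodicPts_symm (f : X ≃ₜ X) : Function.periodicPts f.symm = Function.periodicPts f :=
  Set.ext fun _ => exists_congr fun _ => and_congr_right fun _ => isPeriodicPt_symm_iff

end Iterates

/-- A single jump of an `ε`-pseudo-orbit: `y` is within `ε` of the image of `x`. -/
def EpsStep {M : Type*} [PseudoMetricSpace M] (f : M → M) (ε : ℝ) (x y : M) : Prop :=
  dist (f x) y < ε

/-- The chain (Conley) preorder: for every `ε > 0` there is an `ε`-chain from `x` to `y`.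
`ChainRecurrent f x` is by definition `ChainReachable f x x`. -/
def ChainReachable {M : Type*} [PseudoMetricSpace M] (f : M → M) (x y : M) : Prop :=
  ∀ ε : ℝ, 0 < ε → IsEpsChain f ε x y

section Chains

variable {M : Type*} [PseudoMetricSpace M] {f : M → M} {ε δ : ℝ} {p q x y z : M}

lemma EpsStep.pos (h : EpsStep f ε x y) : 0 < ε :=
  dist_nonneg.trans_lt h

lemma epsStep_apply (hε : 0 < ε) (x : M) : EpsStep f ε x (f x) := by
  simpa [EpsStep] using hε

lemma EpsStep.mono (hεδ : ε ≤ δ) (h : EpsStep f ε x y) : EpsStep f δ x y :=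
  h.trans_le hεδ

lemma reflTransGen_epsStep_iterate (hε : 0 < ε) (x : M) (t : ℕ) :
    Relation.ReflTransGen (EpsStep f ε) x (f^[t] x) := by
  induction t with
  | zero => exact .refl
  | succ t ih => exact ih.tail (Function.iterate_succ_apply' f t x ▸ epsStep_apply hε _)

lemma transGen_epsStep_of_dist_iterate_lt {m : ℕ} (hm : 1 ≤ m) (h : dist (f^[m] x) y < ε) :
    Relation.TransGen (EpsStep f ε) x y := by
  obtain ⟨m, rfl⟩ := Nat.exists_eq_add_of_le' hm
  rw [Function.iterate_succ_apply'] at h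
  exact .tail' (reflTransGen_epsStep_iterate (EpsStep.pos h) x m) h

lemma exists_pseudoOrbit_of_transGen (h : Relation.TransGen (EpsStep f ε) x y) :
    ∃ c : ℕ → M, c 0 = x ∧ (∀ t, EpsStep f ε (c t) (c (t + 1))) ∧
      ∃ N, 0 < N ∧ ∀ t, c (N + t) = f^[t] y := by
  have prepend : ∀ {a b : M} {c : ℕ → M}, EpsStep f ε a b → c 0 = b →
      (∀ t, EpsStep f ε (c t) (c (t + 1))) →
      ∀ t, EpsStep f ε (Nat.casesOn t a c : M) (c t) := by
    intro a b c hab hc hstep t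
    cases t with
    | zero => exact hc ▸ hab
    | succ t => exact hstep t
  induction h using Relation.TransGen.head_induction_on with
  | @single a hay =>
    have horbit (t : ℕ) : EpsStep f ε (f^[t] y) (f^[t + 1] y) :=
      Function.iterate_succ_apply' f t y ▸ epsStep_apply hay.pos _
    exact ⟨fun t => Nat.casesOn t a fun t => f^[t] y, rfl, prepend hay rfl horbit, 1, one_pos,
      fun t => by rw [add_comm]⟩
  | @head a b hab _ ih =>
    obtain ⟨c, hc, hstep, N, -, hN⟩ := ih
    exact ⟨fun t => Nat.casesOn t a c, rfl, prepend hab hc hstep, N + 1, N.succ_pos,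
      fun t => by rw [add_right_comm]; exact hN t⟩

lemma isEpsChain_iff_transGen : IsEpsChain f ε x y ↔ Relation.TransGen (EpsStep f ε) x y := by
  constructor
  · rintro ⟨k, hk, c, m, rfl, rfl, hm, hc⟩
    have reach (i : Fin k) : Relation.TransGen (EpsStep f ε) (c 0) (c i.succ) := by
      obtain ⟨i, hi⟩ := i
      have link := transGen_epsStep_of_dist_iterate_lt (hm ⟨i, hi⟩) (hc ⟨i, hi⟩)
      induction i with
      | zero => exact link
      | succ i ih =>
        have hi' : i < k := Nat.lt_of_succ_lt hi
        exact (ih hi' (transGen_epsStep_of_dist_iterate_lt (hm ⟨i, hi'⟩) (hc ⟨i, hi'⟩))).trans link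
    obtain ⟨k, rfl⟩ := Nat.exists_eq_add_of_le' hk
    exact reach (Fin.last k)
  · intro h
    obtain ⟨c, hc, hstep, N, hN, hcN⟩ := exists_pseudoOrbit_of_transGen h
    exact ⟨N, hN, fun i => c i, fun _ => 1, hc, hcN 0, fun _ => le_rfl, fun i => hstep i⟩

lemma isEpsChain_of_dist_iterate_lt {m : ℕ} (hm : 1 ≤ m) (h : dist (f^[m] x) y < ε) :
    IsEpsChain f ε x y :=
  isEpsChain_iff_transGen.2 (transGen_epsStep_of_dist_iterate_lt hm h)

lemma IsEpsChain.trans (h : IsEpsChain f ε x y) (h' : IsEpsChain f ε y z) :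
    IsEpsChain f ε x z :=
  isEpsChain_iff_transGen.2
    ((isEpsChain_iff_transGen.1 h).trans (isEpsChain_iff_transGen.1 h'))

lemma IsEpsChain.mono (hεδ : ε ≤ δ) (h : IsEpsChain f ε x y) : IsEpsChain f δ x y :=
  isEpsChain_iff_transGen.2
    (Relation.TransGen.mono (fun _ _ => EpsStep.mono hεδ) _ _ (isEpsChain_iff_transGen.1 h))

lemma IsEpsChain.of_dist_right_lt (h : IsEpsChain f ε x y) (hyz : dist y z < δ) :
    IsEpsChain f (ε + δ) x z := by
  have hδ : 0 < δ := dist_nonneg.trans_lt hyz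
  obtain ⟨w, hxw, hwy⟩ := Relation.TransGen.tail'_iff.1 (isEpsChain_iff_transGen.1 h)
  refine isEpsChain_iff_transGen.2 (.tail' (Relation.ReflTransGen.mono ?_ _ _ hxw) ?_)
  · exact fun _ _ => EpsStep.mono (le_add_of_nonneg_right hδ.le)
  · exact (dist_triangle _ _ _).trans_lt (add_lt_add hwy hyz)

lemma ChainReachable.trans (h : ChainReachable f x y) (h' : ChainReachable f y z) :
    ChainReachable f x z :=
  fun ε hε => (h ε hε).trans (h' ε hε)

lemma chainReachable_of_forall_dist_lt
    (h : ∀ ε > 0, ∃ z, IsEpsChain f ε x z ∧ dist z y < ε) : ChainReachable f x y := by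
  intro ε hε
  obtain ⟨z, hxz, hzy⟩ := h (ε / 2) (half_pos hε)
  simpa using hxz.of_dist_right_lt hzy

lemma isClosed_setOf_chainReachable (f : M → M) (x : M) : IsClosed {y | ChainReachable f x y} := by
  refine isClosed_of_closure_subset fun y hy => chainReachable_of_forall_dist_lt fun ε hε => ?_
  obtain ⟨z, hz, hyz⟩ := Metric.mem_closure_iff.1 hy ε hε
  exact ⟨z, hz ε hε, dist_comm y z ▸ hyz⟩

lemma chainReachable_apply (f : M → M) (x : M) : ChainReachable f x (f x) :=
  fun _ hε => isEpsChain_of_dist_iterate_lt (m := 1) le_rfl (by simpa using hε)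

lemma chainReachable_iterate (f : M → M) (x : M) {t : ℕ} (ht : 1 ≤ t) :
    ChainReachable f x (f^[t] x) :=
  fun _ hε => isEpsChain_of_dist_iterate_lt ht (by simpa using hε)

lemma periodicPts_subset_chainRecurrentSet (f : M → M) :
    Function.periodicPts f ⊆ chainRecurrentSet f := by
  rintro p ⟨m, hm, hp⟩
  have := chainReachable_iterate f p hm
  rwa [hp.eq] at this

lemma chainReachable_iterate_of_mem_periodicPts (hp : p ∈ Function.periodicPts f) (t : ℕ) :
    ChainReachable f p (f^[t] p) := by
  obtain rfl | ht := t.eq_zero_or_pos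
  · exact periodicPts_subset_chainRecurrentSet f hp
  · exact chainReachable_iterate f p ht

lemma iterate_chainReachable_of_mem_periodicPts (hp : p ∈ Function.periodicPts f) (t : ℕ) :
    ChainReachable f (f^[t] p) p := by
  obtain ⟨r, hr⟩ := exists_iterate_iterate_eq_of_mem_periodicPts hp t
  simpa only [hr] using
    chainReachable_iterate_of_mem_periodicPts (iterate_mem_periodicPts hp t) r

lemma mem_chainRecurrentSet_of_mapClusterPt (hf : Continuous f)
    (hxy : MapClusterPt y atTop fun t => f^[t] x) : y ∈ chainRecurrentSet f := by
  intro ε hε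
  have near : ∀ᶠ z in 𝓝 y, dist (f y) (f z) < ε ∧ dist z y < ε :=
    (((hf.tendsto y).eventually (Metric.ball_mem_nhds _ hε)).mono fun z hz =>
      (dist_comm _ _).trans_lt hz).and (Metric.ball_mem_nhds y hε)
  obtain ⟨s, hs⟩ := (hxy.frequently near).exists
  obtain ⟨t, ht, ht'⟩ := frequently_atTop.1 (hxy.frequently near) (s + 2)
  obtain ⟨r, rfl⟩ := Nat.exists_eq_add_of_le ht
  have jump : IsEpsChain f ε y (f (f^[s] x)) := isEpsChain_of_dist_iterate_lt (m := 1) le_rfl hs.1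
  refine jump.trans (isEpsChain_of_dist_iterate_lt (Nat.le_add_left 1 r) ?_)
  rw [← Function.iterate_succ_apply' f s, ← Function.iterate_add_apply]
  have : r + 1 + s.succ = s + 2 + r := by omega
  exact this ▸ ht'.2

end Chains

section ChainsOfHomeo

variable {M : Type*} [PseudoMetricSpace M] {f : M ≃ₜ M} {x y : M}

lemma ChainReachable.apply_symm (hx : x ∈ chainRecurrentSet f) (h : ChainReachable f x y) :
    ChainReachable f x (f.symm y) := by
  refine chainReachable_of_forall_dist_lt fun ε hε => ?_
  obtain ⟨δ, hδ, hf⟩ := Metric.continuousAt_iff.1 f.symm.continuous.continuousAt ε hε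
  obtain ⟨z, hxz, hzy⟩ :=
    Relation.TransGen.tail'_iff.1 (isEpsChain_iff_transGen.1 (h _ (lt_min hδ hε)))
  refine ⟨z, ?_, by simpa using hf (hzy.trans_le (min_le_left _ _))⟩
  -- the loop at `x` covers the case in which the chain from `x` to `z` is empty
  have loop := isEpsChain_iff_transGen.1 (hx _ (lt_min hδ hε))
  exact (isEpsChain_iff_transGen.2 (loop.trans_left hxz)).mono (min_le_right _ _)

lemma ChainReachable.iterate_symm (hx : x ∈ chainRecurrentSet f) (h : ChainReachable f x y)
    (t : ℕ) : ChainReachable f x (f.symm^[t] y) := by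
  induction t with
  | zero => exact h
  | succ t ih => exact Function.iterate_succ_apply' f.symm t y ▸ ih.apply_symm hx

lemma chainRecurrentSet_subset_periodicPts (hf : (chainRecurrentSet f).Finite) :
    chainRecurrentSet f ⊆ Function.periodicPts f := by
  have invariant : Set.MapsTo f.symm (chainRecurrentSet f) (chainRecurrentSet f) := by
    intro x hx
    have back : ChainReachable f (f.symm x) x := by
      simpa using chainReachable_apply f (f.symm x)
    exact back.trans (ChainReachable.apply_symm hx hx)
  have : Finite (chainRecurrentSet f) := hf
  intro x hx
  obtain ⟨t, ht, hxt⟩ :=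
    (invariant.restrict_inj.2 f.symm.injective.injOn).mem_periodicPts ⟨x, hx⟩
  refine ⟨t, ht, isPeriodicPt_symm_iff.1 ?_⟩
  have := congrArg Subtype.val hxt.eq
  rwa [invariant.coe_iterate_restrict] at this

variable [CompactSpace M]

lemma ChainReachable.of_symm (h : ChainReachable f.symm x y) : ChainReachable f y x := by
  intro ε hε
  obtain ⟨δ, hδ, hf⟩ := Metric.uniformContinuous_iff.1
    (CompactSpace.uniformContinuous_of_continuous f.continuous) ε hε
  have reverse_step : ∀ a b, EpsStep f.symm δ a b → EpsStep f ε b a := fun a b hab => by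
    simpa [EpsStep, dist_comm] using hf hab
  rw [isEpsChain_iff_transGen, ← Relation.transGen_swap]
  exact Relation.TransGen.mono reverse_step _ _ (isEpsChain_iff_transGen.1 (h δ hδ))

lemma chainReachable_symm_iff : ChainReachable f.symm x y ↔ ChainReachable f y x :=
  ⟨.of_symm, fun h => ChainReachable.of_symm (f := f.symm) h⟩

lemma chainRecurrentSet_symm (f : M ≃ₜ M) : chainRecurrentSet f.symm = chainRecurrentSet f :=
  Set.ext fun _ => chainReachable_symm_iff

end ChainsOfHomeo

section ClusterPoints

lemma exists_isOpen_superset_closure_inter_subset {X : Type*} [TopologicalSpace X] [T2Space X]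
    {F B : Set X} (hF : F.Finite) (hBF : B ⊆ F) :
    ∃ V, IsOpen V ∧ B ⊆ V ∧ closure V ∩ F ⊆ B := by
  obtain ⟨V, W, hV, hW, hBV, hFW, hVW⟩ := SeparatedNhds.of_isCompact_isCompact
    (hF.subset hBF).isCompact (hF.subset Set.sdiff_subset).isCompact
    (Set.disjoint_sdiff_right : Disjoint B (F \ B))
  refine ⟨V, hV, hBV, fun x ⟨hxV, hxF⟩ => by_contra fun hxB => ?_⟩
  exact Set.disjoint_left.1 (hVW.closure_left hW) hxV (hFW ⟨hxF, hxB⟩)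

variable {X : Type*} [TopologicalSpace X] [T2Space X] [CompactSpace X]

lemma tendsto_iterate_of_mapClusterPt_isFixedPt {g : X → X} (hg : Continuous g) {F : Set X}
    (hF : F.Finite) {p x : X} (hp : Function.IsFixedPt g p)
    (hxp : MapClusterPt p atTop fun t => g^[t] x)
    (hxF : ∀ y, MapClusterPt y atTop (fun t => g^[t] x) → y ∈ F) :
    Tendsto (fun t => g^[t] x) atTop (𝓝 p) := by
  obtain ⟨V, hV, hpV, hVF⟩ :=
    exists_isOpen_superset_closure_inter_subset hF (Set.singleton_subset_iff.2 (hxF p hxp))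
  rw [Set.singleton_subset_iff] at hpV
  have no_exit : ∀ᶠ t in atTop, g^[t] x ∉ closure V ∩ g ⁻¹' Vᶜ := by
    refine not_frequently.1 fun hexit => ?_
    obtain ⟨y, ⟨hyV, hgy⟩, hxy⟩ :=
      (isClosed_closure.inter (hV.isClosed_compl.preimage hg)).isCompact
        |>.exists_mapClusterPt_of_frequently hexit
    obtain rfl : y = p := hVF ⟨hyV, hxF y hxy⟩
    exact hgy (by rwa [hp.eq])
  have stay : ∀ᶠ t in atTop, g^[t] x ∈ closure V := by
    obtain ⟨t₀, ht₀⟩ := eventually_atTop.1 no_exit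
    obtain ⟨t₁, ht₁, hxV⟩ := frequently_atTop.1 (hxp.frequently (hV.mem_nhds hpV)) t₀
    refine eventually_atTop.2 ⟨t₁, fun t ht => subset_closure ?_⟩
    induction t, ht using Nat.le_induction with
    | base => exact hxV
    | succ t ht ih =>
      rw [Function.iterate_succ_apply']
      exact not_not.1 fun h => ht₀ t (ht₁.trans ht) ⟨subset_closure ih, h⟩
  refine tendsto_nhds_of_unique_mapClusterPt fun y hxy => ?_
  exact hVF ⟨isClosed_closure.mem_of_mapClusterPt hxy stay, hxF y hxy⟩

lemma exists_tendsto_iterate_mul_minimalPeriod {f : X → X} (hf : Continuous f) {F : Set X}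
    (hF : F.Finite) (hFper : F ⊆ Function.periodicPts f) {x : X}
    (hxF : ∀ y, MapClusterPt y atTop (fun t => f^[t] x) → y ∈ F) :
    ∃ p ∈ F, Tendsto (fun k => f^[k * Function.minimalPeriod f p] x) atTop (𝓝 p) := by
  have tendsto_mul {m : ℕ} (hm : 0 < m) : Tendsto (fun k => k * m) atTop atTop :=
    tendsto_id.atTop_mul_const' hm
  have period_pos {p : X} (hp : p ∈ F) : 0 < Function.minimalPeriod f p :=
    Function.minimalPeriod_pos_of_mem_periodicPts (hFper hp)
  -- along multiples of a common period of `F`, the orbit has some cluster point `p`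
  let N := ∏ p ∈ hF.toFinset, Function.minimalPeriod f p
  have hN : 0 < N := Finset.prod_pos fun p hp => period_pos (hF.mem_toFinset.1 hp)
  obtain ⟨p, hp⟩ := exists_clusterPt_of_compactSpace (map (fun k => f^[k * N] x) atTop)
  have hpF : p ∈ F := hxF p (.of_comp (tendsto_mul hN) hp)
  obtain ⟨d, hd : N = Function.minimalPeriod f p * d⟩ :=
    Finset.dvd_prod_of_mem (Function.minimalPeriod f) (hF.mem_toFinset.2 hpF)
  have hd_pos : 0 < d := Nat.pos_of_mul_pos_left (hd ▸ hN)
  have iterate_eq (k : ℕ) : f^[k * Function.minimalPeriod f p] x =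
      (f^[Function.minimalPeriod f p])^[k] x := by rw [mul_comm, Function.iterate_mul]
  refine ⟨p, hpF, ?_⟩
  simp only [iterate_eq]
  refine tendsto_iterate_of_mapClusterPt_isFixedPt (hf.iterate _) hF
    (Function.isPeriodicPt_minimalPeriod f p) (.of_comp (tendsto_mul hd_pos) ?_) fun y hy => ?_
  · have reindex : (fun k => f^[k * N] x) =
        (fun k => (f^[Function.minimalPeriod f p])^[k] x) ∘ fun k => k * d := by
      funext k
      have : k * d * Function.minimalPeriod f p = k * N := by rw [hd]; ring
      rw [Function.comp_apply, ← iterate_eq, this]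
    exact reindex ▸ hp
  · simp only [← iterate_eq] at hy
    exact hxF y (.of_comp (u := fun t => f^[t] x) (tendsto_mul (period_pos hpF)) hy)

end ClusterPoints

section StableSets

variable {M : Type*} [MetricSpace M] {f : M ≃ₜ M} {p x : M}

lemma unstableSet_eq_stableSet_symm (f : M ≃ₜ M) (p : M) :
    unstableSet f p = stableSet f.symm p := by
  rw [unstableSet, stableSet, minimalPeriod_symm]

lemma stableSet_eq_unstableSet_symm (f : M ≃ₜ M) (p : M) :
    stableSet f p = unstableSet f.symm p :=
  (unstableSet_eq_stableSet_symm f.symm p).symm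

lemma mem_stableSet_self (f : M ≃ₜ M) (p : M) : p ∈ stableSet f p := by
  have fixed (k : ℕ) : f^[k * Function.minimalPeriod f p] p = p :=
    (Function.isPeriodicPt_minimalPeriod f p).const_mul k
  simp only [stableSet, Set.mem_ofPred_eq, fixed, tendsto_const_nhds]

lemma mem_unstableSet_self (f : M ≃ₜ M) (p : M) : p ∈ unstableSet f p :=
  unstableSet_eq_stableSet_symm f p ▸ mem_stableSet_self f.symm p

lemma mem_of_mem_stableSet (hx : x ∈ stableSet f p) {C : Set M} (hC : IsClosed C)
    (hxC : ∀ᶠ t in atTop, f^[t] x ∈ C) (hp : p ∈ Function.periodicPts f) : p ∈ C :=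
  hC.mem_of_tendsto hx <| (tendsto_id.atTop_mul_const'
    (Function.minimalPeriod_pos_of_mem_periodicPts hp)).eventually hxC

lemma mem_of_mem_unstableSet (hx : x ∈ unstableSet f p) {C : Set M} (hC : IsClosed C)
    (hxC : ∀ᶠ t in atTop, f.symm^[t] x ∈ C) (hp : p ∈ Function.periodicPts f) : p ∈ C :=
  mem_of_mem_stableSet (unstableSet_eq_stableSet_symm f p ▸ hx) hC hxC (periodicPts_symm f ▸ hp)

lemma chainReachable_of_mem_stableSet (hp : p ∈ Function.periodicPts f)
    (hx : x ∈ stableSet f p) : ChainReachable f x p :=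
  mem_of_mem_stableSet hx (isClosed_setOf_chainReachable f x)
    ((eventually_ge_atTop 1).mono fun _ => chainReachable_iterate f x) hp

variable [CompactSpace M]

lemma chainReachable_of_mem_unstableSet (hp : p ∈ Function.periodicPts f)
    (hx : x ∈ unstableSet f p) : ChainReachable f p x :=
  chainReachable_symm_iff.1 <| chainReachable_of_mem_stableSet (periodicPts_symm f ▸ hp)
    (unstableSet_eq_stableSet_symm f p ▸ hx)

lemma exists_mem_stableSet (hf : (chainRecurrentSet f).Finite) (x : M) :
    ∃ p ∈ chainRecurrentSet f, x ∈ stableSet f p :=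
  exists_tendsto_iterate_mul_minimalPeriod f.continuous hf
    (chainRecurrentSet_subset_periodicPts hf)
    fun _ => mem_chainRecurrentSet_of_mapClusterPt f.continuous

lemma exists_mem_unstableSet (hf : (chainRecurrentSet f).Finite) (x : M) :
    ∃ p ∈ chainRecurrentSet f, x ∈ unstableSet f p := by
  simp only [unstableSet_eq_stableSet_symm, ← chainRecurrentSet_symm f] at hf ⊢
  exact exists_mem_stableSet hf x

end StableSets

/-! ### From heteroclinic orbits to chains -/

section HeteroclinicOrbits

variable {M : Type*}

lemma exists_last_exit [PseudoMetricSpace M] {f : M → M} {ε : ℝ} {V : Set M} {p q : M}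
    (hp : IsEpsChain f ε p p) (hpq : IsEpsChain f ε p q) (hpV : p ∉ V)
    (hqV : ∀ t, f^[t] q ∈ V) :
    ∃ c : ℕ → M, IsEpsChain f ε p (c 0) ∧ (∀ t, EpsStep f ε (c t) (c (t + 1))) ∧
      c 0 ∉ V ∧ ∀ t, c (t + 1) ∈ V := by
  classical
  rw [isEpsChain_iff_transGen] at hp hpq
  obtain ⟨c, rfl, hstep, N, -, hcN⟩ := exists_pseudoOrbit_of_transGen hpq
  have reach (s : ℕ) : Relation.ReflTransGen (EpsStep f ε) (c 0) (c s) := by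
    induction s with
    | zero => exact .refl
    | succ s ih => exact ih.tail (hstep s)
  obtain ⟨s, hs, hlast⟩ : ∃ s, c s ∉ V ∧ ∀ t, c (s + 1 + t) ∈ V := by
    refine ⟨Nat.findGreatest (c · ∉ V) N,
      Nat.findGreatest_spec (P := (c · ∉ V)) N.zero_le hpV, fun t => ?_⟩
    set s := Nat.findGreatest (c · ∉ V) N
    obtain ht | ht := le_total (s + 1 + t) N
    · exact not_not.1 (Nat.findGreatest_is_greatest (P := (c · ∉ V))
        (Nat.lt_add_right t s.lt_succ_self) ht)
    · obtain ⟨r, hr⟩ := Nat.exists_eq_add_of_le ht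
      rw [hr, hcN]
      exact hqV r
  refine ⟨fun t => c (s + t), isEpsChain_iff_transGen.2 (hp.trans_left (reach s)),
    fun t => hstep (s + t), hs, fun t => ?_⟩
  have := hlast t
  rwa [add_right_comm] at this

lemma tendsto_iterate_of_pseudoOrbit [PseudoMetricSpace M] {ι : Type*} {l : Filter ι} {f : M → M}
    (hf : Continuous f) {ε : ι → ℝ} (hε : Tendsto ε l (𝓝 0)) {c : ι → ℕ → M}
    (hc : ∀ i t, EpsStep f (ε i) (c i t) (c i (t + 1))) {w : M}
    (hw : Tendsto (fun i => c i 0) l (𝓝 w)) (t : ℕ) :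
    Tendsto (fun i => c i t) l (𝓝 (f^[t] w)) := by
  induction t with
  | zero => exact hw
  | succ t ih =>
    rw [Function.iterate_succ_apply']
    refine (tendsto_iff_of_dist ?_).1 ((hf.tendsto _).comp ih)
    exact squeeze_zero (fun _ => dist_nonneg) (fun i => (hc i t).le) hε

lemma exists_forall_iterate_mem_closure [PseudoMetricSpace M] [CompactSpace M] {f : M → M}
    (hf : Continuous f) {V : Set M} (hV : IsOpen V) {p q : M} (hp : p ∈ chainRecurrentSet f)
    (hpq : ChainReachable f p q) (hpV : p ∉ V) (hqV : ∀ t, f^[t] q ∈ V) :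
    ∃ z, ChainReachable f p z ∧ z ∉ V ∧ ∀ t, f^[t + 1] z ∈ closure V := by
  let ε (n : ℕ) : ℝ := 1 / (n + 1)
  have hε (n : ℕ) : 0 < ε n := Nat.one_div_pos_of_nat
  choose c hpc hc hc₀ hcV using fun n => exists_last_exit (hp _ (hε n)) (hpq _ (hε n)) hpV hqV
  obtain ⟨z, φ, hφ, hz⟩ := CompactSpace.tendsto_subseq fun n => c n 0
  have hεφ : Tendsto (ε ∘ φ) atTop (𝓝 0) :=
    tendsto_one_div_add_atTop_nhds_zero_nat.comp hφ.tendsto_atTop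
  have limit := tendsto_iterate_of_pseudoOrbit hf hεφ (fun n => hc (φ n)) hz
  refine ⟨z, chainReachable_of_forall_dist_lt fun δ hδ => ?_, ?_, fun t => ?_⟩
  · obtain ⟨n, hn, hnz⟩ :=
      ((hεφ.eventually (gt_mem_nhds hδ)).and (hz.eventually (Metric.ball_mem_nhds z hδ))).exists
    exact ⟨c (φ n) 0, (hpc (φ n)).mono hn.le, hnz⟩
  · exact hV.isClosed_compl.mem_of_tendsto hz (.of_forall fun n => hc₀ (φ n))
  · exact mem_closure_of_tendsto (limit (t + 1)) (.of_forall fun n => hcV (φ n) t)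

lemma exists_minimal_chainReachable [PseudoMetricSpace M] {f : M → M} {S : Set M}
    (hS : S.Finite) (hSne : S.Nonempty) :
    ∃ q ∈ S, ∀ q' ∈ S, ChainReachable f q' q → ChainReachable f q q' := by
  let below (x y : M) : Prop := ChainReachable f x y ∧ ¬ ChainReachable f y x
  have : IsStrictOrder M below :=
    { irrefl := fun _ h => h.2 h.1
      trans := fun _ _ _ h h' => ⟨h.1.trans h'.1, fun hback => h.2 (h'.1.trans hback)⟩ }
  obtain ⟨q, _, hmin⟩ := (hS.wellFoundedOn (r := below)).has_min
    (Set.univ : Set S) (hSne.elim fun x hx => ⟨⟨x, hx⟩, trivial⟩)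
  exact ⟨q, q.2, fun q' hq' h => by_contra fun h' => hmin ⟨q', hq'⟩ trivial ⟨h, h'⟩⟩

/-- By finiteness pick a minimal `q₀ ∉ P` reachable from `p`. An orbit leaving a neighbourhood of
the class `B` of `q₀` for the last time is heteroclinic; minimality forces its source into `P`, or
else makes the orbit itself recurrent. -/
theorem mem_of_chainReachable_of_heteroclinic_closed [MetricSpace M] [CompactSpace M] {f : M ≃ₜ M}
    (hf : (chainRecurrentSet f).Finite) {P : Set M} (hPf : Set.MapsTo f P P)
    (hP : ∀ p ∈ P, ∀ q ∈ chainRecurrentSet f,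
      (unstableSet f p ∩ stableSet f q).Nonempty → q ∈ P)
    {p q : M} (hp : p ∈ chainRecurrentSet f) (hpP : p ∈ P) (hq : q ∈ chainRecurrentSet f)
    (hpq : ChainReachable f p q) : q ∈ P := by
  by_contra hqP
  have periodic := chainRecurrentSet_subset_periodicPts hf
  obtain ⟨q₀, ⟨⟨hq₀, hq₀P⟩, hpq₀⟩, hmin⟩ := exists_minimal_chainReachable (f := f)
    (hf.subset fun x hx => hx.1.1 : {x ∈ chainRecurrentSet f \ P | ChainReachable f p x}.Finite)
    ⟨q, ⟨hq, hqP⟩, hpq⟩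
  let B := {x ∈ chainRecurrentSet f \ P | ChainReachable f x q₀ ∧ ChainReachable f q₀ x}
  obtain ⟨V, hV, hBV, hVB⟩ := exists_isOpen_superset_closure_inter_subset hf
    (fun x hx => hx.1.1 : B ⊆ chainRecurrentSet f)
  have hpV : p ∉ V := fun h => (hVB ⟨subset_closure h, hp⟩).1.2 hpP
  have orbit_mem (t : ℕ) : f^[t] q₀ ∈ V :=
    hBV ⟨⟨periodicPts_subset_chainRecurrentSet f (iterate_mem_periodicPts (periodic hq₀) t),
        fun h => hq₀P (mem_of_iterate_mem_of_mem_periodicPts hPf (periodic hq₀) h)⟩,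
      iterate_chainReachable_of_mem_periodicPts (periodic hq₀) t,
      chainReachable_iterate_of_mem_periodicPts (periodic hq₀) t⟩
  obtain ⟨z, hpz, hzV, hz⟩ :=
    exists_forall_iterate_mem_closure f.continuous hV hp hpq₀ hpV orbit_mem
  obtain ⟨ω, hω, hzω⟩ := exists_mem_stableSet hf z
  obtain ⟨α, hα, hzα⟩ := exists_mem_unstableSet hf z
  have hωB : ω ∈ B := hVB ⟨mem_of_mem_stableSet hzω isClosed_closure
    (eventually_atTop.2 ⟨1, fun t ht => Nat.sub_add_cancel ht ▸ hz (t - 1)⟩) (periodic hω), hω⟩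
  have hzq₀ : ChainReachable f z q₀ :=
    (chainReachable_of_mem_stableSet (periodic hω) hzω).trans hωB.2.1
  have hαz : ChainReachable f α z := chainReachable_of_mem_unstableSet (periodic hα) hzα
  have hpα : ChainReachable f p α :=
    mem_of_mem_unstableSet hzα (isClosed_setOf_chainReachable f p)
      (.of_forall (hpz.iterate_symm hp)) (periodic hα)
  have hαP : α ∉ P := fun h => hωB.1.2 (hP α h ω hω ⟨z, hzα, hzω⟩)
  have hq₀z : ChainReachable f q₀ z := (hmin α ⟨⟨hα, hαP⟩, hpα⟩ (hαz.trans hzq₀)).trans hαz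
  have hzrec : z ∈ chainRecurrentSet f := hzq₀.trans hq₀z
  have hfz : f z ∈ B := hVB ⟨hz 0,
    periodicPts_subset_chainRecurrentSet f (iterate_mem_periodicPts (periodic hzrec) 1)⟩
  exact hzV (hBV ⟨⟨hzrec, fun h => hfz.1.2 (hPf h)⟩, hzq₀, hq₀z⟩)

end HeteroclinicOrbits

/-! ### Attractors from chains -/

/-- `A` is an attractor of `f` with trapping neighbourhood `Q`. -/
def IsTrappingNeighborhood {M : Type*} [TopologicalSpace M] (f : M → M) (A Q : Set M) : Prop :=
  IsCompact Q ∧ A ⊆ interior Q ∧ f '' Q ⊆ interior Q ∧ ⋂ m : ℕ, f^[m] '' Q = A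

/-- The set of endpoints of `ε`-chains starting in `P`; for a chain-closed set of chain recurrent
points and small `ε`, its closure is a trapping neighbourhood. -/
def epsChainHull {M : Type*} [PseudoMetricSpace M] (f : M → M) (ε : ℝ) (P : Set M) : Set M :=
  {y | ∃ p ∈ P, IsEpsChain f ε p y}

section Attractors

variable {M : Type*}

lemma mem_iInter_iterate_image_iff [TopologicalSpace M] {f : M ≃ₜ M} {Q : Set M} {x : M} :
    x ∈ ⋂ m : ℕ, f^[m] '' Q ↔ ∀ m, f.symm^[m] x ∈ Q := by
  have image_eq (m : ℕ) : f^[m] '' Q = f.symm^[m] ⁻¹' Q :=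
    congrFun (Set.image_eq_preimage_of_inverse (iterate_iterate_symm_apply f.symm m)
      (iterate_iterate_symm_apply f m)) Q
  simp only [image_eq, Set.mem_iInter, Set.mem_preimage]

section Hull

variable [PseudoMetricSpace M] {f : M → M} {ε δ : ℝ} {P : Set M}

lemma isOpen_epsChainHull : IsOpen (epsChainHull f ε P) := by
  refine isOpen_iff_mem_nhds.2 fun y ⟨p, hp, hpy⟩ => ?_
  obtain ⟨w, hpw, hwy⟩ := Relation.TransGen.tail'_iff.1 (isEpsChain_iff_transGen.1 hpy)
  filter_upwards [Metric.isOpen_ball.mem_nhds (Metric.mem_ball'.2 hwy)] with z hz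
  exact ⟨p, hp, isEpsChain_iff_transGen.2 (.tail' hpw (Metric.mem_ball'.1 hz))⟩

lemma closure_epsChainHull_subset (hδ : 0 < δ) :
    closure (epsChainHull f ε P) ⊆ epsChainHull f (ε + δ) P := by
  intro y hy
  obtain ⟨z, ⟨p, hp, hpz⟩, hyz⟩ := Metric.mem_closure_iff.1 hy δ hδ
  exact ⟨p, hp, hpz.of_dist_right_lt (dist_comm y z ▸ hyz)⟩

lemma image_closure_epsChainHull_subset (hf : Continuous f) (hε : 0 < ε) :
    f '' closure (epsChainHull f ε P) ⊆ epsChainHull f ε P := by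
  rintro _ ⟨y, hy, rfl⟩
  have near : ∀ᶠ z in 𝓝 y, dist (f z) (f y) < ε :=
    (hf.tendsto y).eventually (Metric.ball_mem_nhds _ hε)
  obtain ⟨z, ⟨p, hp, hpz⟩, hzy⟩ := ((mem_closure_iff_frequently.1 hy).and_eventually near).exists
  exact ⟨p, hp, hpz.trans (isEpsChain_of_dist_iterate_lt (m := 1) le_rfl hzy)⟩

lemma exists_epsChainHull_inter_subset {F : Set M} (hF : F.Finite) (hPF : P ⊆ F)
    (hP : ∀ p ∈ P, ∀ q ∈ F, ChainReachable f p q → q ∈ P) :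
    ∃ ε > 0, epsChainHull f ε P ∩ F ⊆ P := by
  have separated : ∀ᶠ ε : ℝ in 𝓝[>] 0, ∀ p ∈ P, ∀ q ∈ F \ P, ¬ IsEpsChain f ε p q := by
    refine ((hF.subset hPF).eventually_all).2 fun p hp =>
      ((hF.subset Set.sdiff_subset).eventually_all).2 fun q ⟨hqF, hqP⟩ => ?_
    have : ¬ ChainReachable f p q := fun h => hqP (hP p hp q hqF h)
    simp only [ChainReachable, not_forall] at this
    obtain ⟨δ, hδ, hpq⟩ := this
    filter_upwards [Ioc_mem_nhdsGT hδ] with ε hε h using hpq (h.mono hε.2)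
  obtain ⟨ε, hsep, hε⟩ := (separated.and self_mem_nhdsWithin).exists
  exact ⟨ε, hε, fun q ⟨⟨p, hp, hpq⟩, hqF⟩ => by_contra fun hqP => hsep p hp q ⟨hqF, hqP⟩ hpq⟩

end Hull

variable [MetricSpace M] [CompactSpace M] {f : M ≃ₜ M} {P : Set M}

theorem exists_isTrappingNeighborhood_iUnion_unstableSet (hf : (chainRecurrentSet f).Finite)
    (hPrec : P ⊆ chainRecurrentSet f)
    (hP : ∀ p ∈ P, ∀ q ∈ chainRecurrentSet f, ChainReachable f p q → q ∈ P) :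
    ∃ Q, IsTrappingNeighborhood f (⋃ p ∈ P, unstableSet f p) Q := by
  have periodic := chainRecurrentSet_subset_periodicPts hf
  obtain ⟨ε, hε, hεP⟩ := exists_epsChainHull_inter_subset hf hPrec hP
  let Q := closure (epsChainHull f (ε / 2) P)
  have hQP : Q ∩ chainRecurrentSet f ⊆ P := by
    have := closure_epsChainHull_subset (f := f) (ε := ε / 2) (P := P) (half_pos hε)
    rw [add_halves] at this
    exact (Set.inter_subset_inter_left _ this).trans hεP
  have hull_subset : epsChainHull f (ε / 2) P ⊆ interior Q :=
    interior_maximal subset_closure isOpen_epsChainHull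
  have reach {x : M} (hx : x ∈ ⋃ p ∈ P, unstableSet f p) (m : ℕ) :
      f.symm^[m] x ∈ epsChainHull f (ε / 2) P := by
    obtain ⟨p, hp, hpx⟩ := Set.mem_iUnion₂.1 hx
    have := chainReachable_of_mem_unstableSet (periodic (hPrec hp)) hpx
    exact ⟨p, hp, this.iterate_symm (hPrec hp) m _ (half_pos hε)⟩
  refine ⟨Q, isClosed_closure.isCompact, fun x hx => hull_subset (reach hx 0),
    (image_closure_epsChainHull_subset f.continuous (half_pos hε)).trans hull_subset,
    Set.Subset.antisymm (fun x hx => ?_) fun x hx => ?_⟩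
  · rw [mem_iInter_iterate_image_iff] at hx
    obtain ⟨q, hq, hxq⟩ := exists_mem_unstableSet hf x
    have hqQ : q ∈ Q := mem_of_mem_unstableSet hxq isClosed_closure (.of_forall hx) (periodic hq)
    exact Set.mem_iUnion₂.2 ⟨q, hQP ⟨hqQ, hq⟩, hxq⟩
  · exact mem_iInter_iterate_image_iff.2 fun m => subset_closure (reach hx m)

theorem exists_isTrappingNeighborhood_iUnion_stableSet (hf : (chainRecurrentSet f).Finite)
    (hP : ∀ p ∈ P, ∀ q ∈ chainRecurrentSet f, ChainReachable f p q → q ∈ P) :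
    ∃ Q, IsTrappingNeighborhood f.symm (⋃ p ∈ chainRecurrentSet f \ P, stableSet f p) Q := by
  simp only [stableSet_eq_unstableSet_symm]
  rw [← chainRecurrentSet_symm f] at hf ⊢
  refine exists_isTrappingNeighborhood_iUnion_unstableSet hf Set.sdiff_subset ?_
  rw [chainRecurrentSet_symm]
  rintro p ⟨hp, hpP⟩ q hq hpq
  exact ⟨hq, fun hqP => hpP (hP q hqP p hp (chainReachable_symm_iff.1 hpq))⟩

end Attractors

/-! ### Sets which do not separate -/

/-- A set which does not separate small neighbourhoods of its points, the only property of a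
locally flat submanifold of codimension at least two that matters here. -/
def IsLocallyNonseparating {X : Type*} [TopologicalSpace X] (C : Set X) : Prop :=
  ∀ x ∈ C, ∀ B ∈ 𝓝 x, ∃ B' ∈ 𝓝 x, B' ⊆ B ∧ IsConnected (B' \ C)

section NonseparatingSubmodules

variable {E : Type*} [NormedAddCommGroup E] [NormedSpace ℝ E] {S : Submodule ℝ E} {c : E} {r : ℝ}

lemma univBall_mem_submodule_iff (hc : c ∈ S) {x : E} :
    OpenPartialHomeomorph.univBall c r x ∈ S ↔ x ∈ S := by
  unfold OpenPartialHomeomorph.univBall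
  split_ifs with hr
  · change r • OpenPartialHomeomorph.univUnitBall x + c ∈ S ↔ x ∈ S
    have : r * (√(1 + ‖x‖ ^ 2))⁻¹ ≠ 0 := by positivity
    rw [OpenPartialHomeomorph.univUnitBall_apply, smul_smul, S.add_mem_iff_left hc,
      S.smul_mem_iff this]
  · change x + c ∈ S ↔ x ∈ S
    exact S.add_mem_iff_left hc

lemma isConnected_ball_sdiff_submodule (hS : 1 < Module.rank ℝ (E ⧸ S)) (hc : c ∈ S) (hr : 0 < r) :
    IsConnected (Metric.ball c r \ S) := by
  have image_eq : OpenPartialHomeomorph.univBall c r '' (S : Set E)ᶜ = Metric.ball c r \ S := by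
    have preimage_eq : (S : Set E) = OpenPartialHomeomorph.univBall c r ⁻¹' S :=
      Set.ext fun x => (univBall_mem_submodule_iff hc).symm
    have range_eq : Set.range (OpenPartialHomeomorph.univBall c r) = Metric.ball c r := by
      rw [← OpenPartialHomeomorph.univBall_target c hr,
        ← (OpenPartialHomeomorph.univBall c r).image_source_eq_target,
        OpenPartialHomeomorph.univBall_source, Set.image_univ]
    conv_lhs => rw [preimage_eq, ← Set.preimage_compl]
    rw [Set.image_preimage_eq_inter_range, range_eq, Set.inter_comm, Set.sdiff_eq]
  rw [← image_eq]
  exact (isConnected_compl_of_one_lt_codim hS).image _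
    (OpenPartialHomeomorph.continuous_univBall c r).continuousOn

lemma isLocallyNonseparating_submodule (hS : 1 < Module.rank ℝ (E ⧸ S)) :
    IsLocallyNonseparating (S : Set E) := by
  intro x hx B hB
  obtain ⟨r, hr, hrB⟩ := Metric.mem_nhds_iff.1 hB
  exact ⟨_, Metric.ball_mem_nhds x hr, hrB, isConnected_ball_sdiff_submodule hS hx hr⟩

end NonseparatingSubmodules

section Nonseparating

variable {X Y ι : Type*} [TopologicalSpace X] [TopologicalSpace Y] {C : Set X}

lemma IsLocallyNonseparating.image (hC : IsLocallyNonseparating C) {φ : X → Y}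
    (hφ : IsOpenEmbedding φ) : IsLocallyNonseparating (φ '' C) := by
  rintro _ ⟨x, hx, rfl⟩ B hB
  obtain ⟨B', hB', hB'B, hconn⟩ := hC x hx _ (hφ.continuous.continuousAt.preimage_mem_nhds hB)
  refine ⟨φ '' B', hφ.image_mem_nhds.2 hB', Set.image_subset_iff.2 hB'B, ?_⟩
  rw [← Set.image_sdiff hφ.injective]
  exact hconn.image φ hφ.continuous.continuousOn

lemma IsLocallyNonseparating.interior_eq_empty (hC : IsLocallyNonseparating C) :
    interior C = ∅ := by
  refine Set.eq_empty_of_forall_notMem fun x hx => ?_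
  obtain ⟨B', -, hB'C, hconn⟩ := hC x (interior_subset hx) C (mem_interior_iff_mem_nhds.1 hx)
  exact hconn.nonempty.ne_empty (Set.sdiff_eq_empty.2 hB'C)

lemma IsLocallyNonseparating.exists_mem_closure_inter_closure (hC : IsLocallyNonseparating C)
    {P Q : Set X} (hPC : Disjoint P C) (hQC : Disjoint Q C)
    (hPQ : closure P ∪ closure Q = Set.univ) {x : X} (hx : x ∈ C)
    (hxPQ : x ∈ closure P ∩ closure Q) {B : Set X} (hB : B ∈ 𝓝 x) :
    ∃ y ∈ B \ C, y ∈ closure P ∩ closure Q := by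
  obtain ⟨B', hB', hB'B, hconn⟩ := hC x hx B hB
  have meets {V : Set X} (hVC : Disjoint V C) (hxV : x ∈ closure V) :
      (B' \ C ∩ closure V).Nonempty := by
    obtain ⟨y, hyB', hyV⟩ := mem_closure_iff_nhds.1 hxV B' hB'
    exact ⟨y, ⟨hyB', Set.disjoint_left.1 hVC hyV⟩, subset_closure hyV⟩
  obtain ⟨y, hy, hyPQ⟩ := isPreconnected_closed_iff.1 hconn.isPreconnected _ _ isClosed_closure
    isClosed_closure (hPQ ▸ Set.subset_univ _) (meets hPC hxPQ.1) (meets hQC hxPQ.2)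
  exact ⟨y, ⟨hB'B hy.1, hy.2⟩, hyPQ⟩

variable [T2Space X] [LocallyCompactSpace X] [Countable ι] {C : ι → Set X}

lemma dense_compl_iUnion_of_isSigmaCompact (hC : ∀ i, IsSigmaCompact (C i))
    (hCint : ∀ i, interior (C i) = ∅) : Dense (⋃ i, C i)ᶜ := by
  choose K hK hKC using hC
  have compl_eq : (⋃ i, C i)ᶜ = ⋂ α : ι × ℕ, (K α.1 α.2)ᶜ := by
    rw [← Set.compl_iUnion, Set.iUnion_prod']
    simp only [hKC]
  rw [compl_eq]
  refine dense_iInter_of_isOpen (fun α => (hK α.1 α.2).isClosed.isOpen_compl) fun α => ?_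
  rw [← interior_eq_empty_iff_dense_compl, ← Set.subset_empty_iff, ← hCint α.1, ← hKC α.1]
  exact interior_mono (Set.subset_iUnion _ _)

lemma exists_mem_nhds_inter_subset_of_subset_iUnion {T : Set X} (hT : IsClosed T)
    (hne : T.Nonempty) (hC : ∀ i, IsSigmaCompact (C i)) (hTC : T ⊆ ⋃ i, C i) :
    ∃ i, ∃ x ∈ T, ∃ B ∈ 𝓝 x, B ∩ T ⊆ C i := by
  choose K hK hKC using hC
  have : LocallyCompactSpace T := hT.locallyCompactSpace
  have : Nonempty T := hne.to_subtype
  have cover : T ⊆ ⋃ α : ι × ℕ, K α.1 α.2 := by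
    rw [Set.iUnion_prod']
    simpa only [hKC] using hTC
  obtain ⟨α, x, hx⟩ := nonempty_interior_of_iUnion_of_closed
    (f := fun α : ι × ℕ => ((↑) : T → X) ⁻¹' K α.1 α.2)
    (fun α => (hK α.1 α.2).isClosed.preimage continuous_subtype_val) (by
      rw [← Set.preimage_iUnion]
      exact Set.eq_univ_of_forall fun t => cover t.2)
  obtain ⟨B, hB, hBK⟩ := (mem_nhds_subtype T x _).1 (mem_interior_iff_mem_nhds.1 hx)
  exact ⟨α.1, x, x.2, B, hB, fun y hy =>
    hKC α.1 ▸ Set.mem_iUnion_of_mem α.2 (hBK (a := ⟨y, hy.2⟩) hy.1)⟩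

-- If open sets `P` and `Q` split the complement, then `closure P ∩ closure Q` is covered by the
-- `C i`; by Baire, near one of its points it lies in a single `C i`, which then separates locally.
theorem isConnected_compl_iUnion_of_isLocallyNonseparating [ConnectedSpace X]
    (hclosed : IsClosed (⋃ i, C i)) (hC : ∀ i, IsSigmaCompact (C i))
    (hsep : ∀ i, IsLocallyNonseparating (C i)) : IsConnected (⋃ i, C i)ᶜ := by
  have dense := dense_compl_iUnion_of_isSigmaCompact hC fun i => (hsep i).interior_eq_empty
  refine ⟨dense.nonempty, fun u v hu hv huv hPne hQne => ?_⟩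
  set R := ⋃ i, C i
  set P := Rᶜ ∩ u
  set Q := Rᶜ ∩ v
  by_contra hdisj
  have hPQ : Disjoint P Q := by
    rw [Set.disjoint_iff_inter_eq_empty, ← Set.inter_inter_distrib_left]
    exact Set.not_nonempty_iff_eq_empty.1 hdisj
  have hRc : Rᶜ = P ∪ Q := by rw [← Set.inter_union_distrib_left, Set.inter_eq_left.2 huv]
  have cover : closure P ∪ closure Q = Set.univ := by
    rw [← closure_union, ← hRc, dense.closure_eq]
  have hTne : (closure P ∩ closure Q).Nonempty := by
    simpa using isPreconnected_closed_iff.1 isPreconnected_univ _ _ isClosed_closure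
      isClosed_closure cover.ge (by simpa using hPne.closure) (by simpa using hQne.closure)
  have hTR : closure P ∩ closure Q ⊆ R := by
    rintro x ⟨hxP, hxQ⟩
    by_contra hxR
    rcases hRc.le hxR with h | h
    · exact Set.disjoint_left.1 (hPQ.closure_right (hclosed.isOpen_compl.inter hu)) h hxQ
    · exact Set.disjoint_left.1 (hPQ.closure_left (hclosed.isOpen_compl.inter hv)) hxP h
  obtain ⟨i, x, hxT, B, hB, hBC⟩ := exists_mem_nhds_inter_subset_of_subset_iUnion
    (isClosed_closure.inter isClosed_closure) hTne hC hTR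
  have disjoint_of_subset {V : Set X} (hV : V ⊆ Rᶜ) : Disjoint V (C i) :=
    (disjoint_compl_left.mono_left hV).mono_right (Set.subset_iUnion C i)
  obtain ⟨y, ⟨hyB, hyC⟩, hyT⟩ := (hsep i).exists_mem_closure_inter_closure
    (disjoint_of_subset Set.inter_subset_left) (disjoint_of_subset Set.inter_subset_left) cover
    (hBC ⟨mem_of_mem_nhds hB, hxT⟩) hxT hB
  exact hyC (hBC ⟨hyB, hyT⟩)

end Nonseparating

/-! ### Connected basins have connected attractors -/

section ConnectedSubsets

variable {X : Type*} [TopologicalSpace X]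

lemma IsChartedEuclidean.locallyConnectedSpace {n : ℕ} (hX : IsChartedEuclidean n X) :
    LocallyConnectedSpace X := by
  refine locallyConnectedSpace_iff_connected_subsets.2 fun x W hW => ?_
  obtain ⟨U, hU, hxU, ⟨h⟩⟩ := hX x
  have := h.locallyConnectedSpace
  obtain ⟨V, hV, hVconn, hVW⟩ := locallyConnectedSpace_iff_connected_subsets.1 this ⟨x, hxU⟩ _
    (preimage_coe_mem_nhds_subtype.2 (mem_nhdsWithin_of_mem_nhds hW))
  exact ⟨(↑) '' V, hU.isOpenEmbedding_subtypeVal.image_mem_nhds.2 hV,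
    hVconn.image _ continuous_subtype_val.continuousOn, Set.image_subset_iff.2 hVW⟩

variable [T2Space X]

section CompactConnected

variable [LocallyCompactSpace X] [LocallyConnectedSpace X] {W : Set X}

lemma exists_mem_nhds_isCompact_isConnected_subset {x : X} (hW : W ∈ 𝓝 x) :
    ∃ L ∈ 𝓝 x, IsCompact L ∧ IsConnected L ∧ L ⊆ W := by
  obtain ⟨K, hK, hKW, hKc⟩ := local_compact_nhds hW
  obtain ⟨V, hVK, hV, hxV, hVconn⟩ :=
    locallyConnectedSpace_iff_subsets_isOpen_isConnected.1 ‹_› x K hK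
  have hVK := closure_minimal hVK hKc.isClosed
  exact ⟨closure V, mem_of_superset (hV.mem_nhds hxV) subset_closure,
    hKc.of_isClosed_subset isClosed_closure hVK, hVconn.closure, hVK.trans hKW⟩

lemma exists_isCompact_isConnected_mem_mem (hW : IsOpen W) (hWconn : IsPreconnected W) {x y : X}
    (hx : x ∈ W) (hy : y ∈ W) :
    ∃ L ⊆ W, IsCompact L ∧ IsConnected L ∧ x ∈ L ∧ y ∈ L := by
  refine hWconn.induction₂
    (fun x y => ∃ L ⊆ W, IsCompact L ∧ IsConnected L ∧ x ∈ L ∧ y ∈ L) ?_ ?_ ?_ hx hy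
  · intro x hx
    obtain ⟨L, hL, hLc, hLconn, hLW⟩ :=
      exists_mem_nhds_isCompact_isConnected_subset (hW.mem_nhds hx)
    filter_upwards [mem_nhdsWithin_of_mem_nhds hL] with y hy
    exact ⟨L, hLW, hLc, hLconn, mem_of_mem_nhds hL, hy⟩
  · rintro x y z - - - ⟨L, hLW, hLc, hLconn, hxL, hyL⟩ ⟨L', hLW', hLc', hLconn', hyL', hzL'⟩
    exact ⟨L ∪ L', Set.union_subset hLW hLW', hLc.union hLc', .union ⟨y, hyL, hyL'⟩ hLconn hLconn',
      .inl hxL, .inr hzL'⟩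
  · rintro x y - - ⟨L, hLW, hLc, hLconn, hxL, hyL⟩
    exact ⟨L, hLW, hLc, hLconn, hyL, hxL⟩

lemma exists_isCompact_isConnected_superset (hW : IsOpen W) (hWconn : IsConnected W) {A : Set X}
    (hA : IsCompact A) (hAW : A ⊆ W) : ∃ L ⊆ W, IsCompact L ∧ IsConnected L ∧ A ⊆ L := by
  obtain ⟨x₀, hx₀⟩ := hWconn.nonempty
  suffices ∃ L ⊆ W, IsCompact L ∧ IsConnected L ∧ x₀ ∈ L ∧ A ⊆ L by
    obtain ⟨L, hLW, hLc, hLconn, -, hAL⟩ := this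
    exact ⟨L, hLW, hLc, hLconn, hAL⟩
  refine hA.induction_on (p := fun A => ∃ L ⊆ W, IsCompact L ∧ IsConnected L ∧ x₀ ∈ L ∧ A ⊆ L)
    ⟨{x₀}, Set.singleton_subset_iff.2 hx₀, isCompact_singleton, isConnected_singleton, rfl,
      Set.empty_subset _⟩ ?_ ?_ ?_
  · rintro s t hst ⟨L, hLW, hLc, hLconn, hx₀L, htL⟩
    exact ⟨L, hLW, hLc, hLconn, hx₀L, hst.trans htL⟩
  · rintro s t ⟨L, hLW, hLc, hLconn, hx₀L, hsL⟩ ⟨L', hLW', hLc', hLconn', hx₀L', htL'⟩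
    exact ⟨L ∪ L', Set.union_subset hLW hLW', hLc.union hLc',
      .union ⟨x₀, hx₀L, hx₀L'⟩ hLconn hLconn', .inl hx₀L, Set.union_subset_union hsL htL'⟩
  · intro x hx
    obtain ⟨L, hL, hLc, hLconn, hLW⟩ :=
      exists_mem_nhds_isCompact_isConnected_subset (hW.mem_nhds (hAW hx))
    obtain ⟨L', hLW', hLc', hLconn', hx₀L', hxL'⟩ :=
      exists_isCompact_isConnected_mem_mem hW hWconn.isPreconnected hx₀ (hAW hx)
    exact ⟨L, mem_nhdsWithin_of_mem_nhds hL, L' ∪ L, Set.union_subset hLW' hLW, hLc'.union hLc,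
      .union ⟨x, hxL', mem_of_mem_nhds hL⟩ hLconn' hLconn, .inl hx₀L', Set.subset_union_right⟩

end CompactConnected

lemma isConnected_iInter_of_subset_of_subset {ι : Type*} [Nonempty ι] {Q K : ι → Set X}
    (hQ : Directed (· ⊇ ·) Q) (hQc : ∀ i, IsCompact (Q i)) (hK : ∀ i, IsConnected (K i))
    (hQK : ∀ i, ⋂ j, Q j ⊆ K i) (hKQ : ∀ i, K i ⊆ Q i) : IsConnected (⋂ i, Q i) := by
  refine ⟨IsCompact.nonempty_iInter_of_directed_nonempty_isCompact_isClosed Q hQ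
    (fun i => (hK i).nonempty.mono (hKQ i)) hQc fun i => (hQc i).isClosed, ?_⟩
  have hclosed : IsClosed (⋂ i, Q i) := isClosed_iInter fun i => (hQc i).isClosed
  have hA : IsCompact (⋂ i, Q i) :=
    (hQc (Classical.arbitrary ι)).of_isClosed_subset hclosed (Set.iInter_subset _ _)
  refine (isPreconnected_iff_subset_of_fully_disjoint_closed hclosed).2 fun u v hu hv huv huv' => ?_
  obtain ⟨U, V, hU, hV, huU, hvV, hUV⟩ : SeparatedNhds ((⋂ i, Q i) ∩ u) ((⋂ i, Q i) ∩ v) :=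
    .of_isCompact_isCompact (hA.inter_right hu) (hA.inter_right hv)
      (huv'.mono Set.inter_subset_right Set.inter_subset_right)
  have hAUV : ⋂ i, Q i ⊆ U ∪ V := fun x hx =>
    (huv hx).imp (fun hxu => huU ⟨hx, hxu⟩) fun hxv => hvV ⟨hx, hxv⟩
  obtain ⟨i, hi⟩ := exists_subset_nhds_of_isCompact hQ hQc
    fun x hx => (hU.union hV).mem_nhds (hAUV hx)
  refine (IsPreconnected.subset_or_subset hU hV hUV ((hKQ i).trans hi) (hK i).isPreconnected).imp
    (fun hKU x hx => (huv hx).resolve_right fun hxv => ?_)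
    fun hKV x hx => (huv hx).resolve_left fun hxu => ?_
  · exact Set.disjoint_left.1 hUV (hKU (hQK i hx)) (hvV ⟨hx, hxv⟩)
  · exact Set.disjoint_left.1 hUV (huU ⟨hx, hxu⟩) (hKV (hQK i hx))

end ConnectedSubsets

namespace IsTrappingNeighborhood

variable {X : Type*} [TopologicalSpace X] {A Q : Set X}

section Maps

variable {f : X → X}

lemma mapsTo (h : IsTrappingNeighborhood f A Q) : Set.MapsTo f Q (interior Q) :=
  Set.mapsTo_iff_image_subset.2 h.2.2.1

lemma subset_iUnion_preimage_interior (h : IsTrappingNeighborhood f A Q) :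
    A ⊆ ⋃ m : ℕ, f^[m] ⁻¹' interior Q :=
  h.2.1.trans (Set.subset_iUnion_of_subset 0 subset_rfl)

lemma monotone_preimage_interior (h : IsTrappingNeighborhood f A Q) :
    Monotone fun m : ℕ => f^[m] ⁻¹' interior Q :=
  monotone_nat_of_le_succ fun m x hx => by
    rw [Set.mem_preimage, Function.iterate_succ_apply']
    exact h.mapsTo (interior_subset hx)

lemma antitone_image (h : IsTrappingNeighborhood f A Q) : Antitone fun m : ℕ => f^[m] '' Q :=
  antitone_nat_of_succ_le fun m => by
    rw [Function.iterate_succ, Set.image_comp]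
    exact Set.image_mono (h.2.2.1.trans interior_subset)

end Maps

variable {f : X ≃ₜ X}

lemma subset_image_iterate (h : IsTrappingNeighborhood f A Q) (m : ℕ) : A ⊆ f^[m] '' A := by
  intro x hx
  refine ⟨f.symm^[m] x, ?_, iterate_iterate_symm_apply f m x⟩
  rw [← h.2.2.2, mem_iInter_iterate_image_iff] at hx ⊢
  intro t
  rw [← Function.iterate_add_apply]
  exact hx _

theorem isConnected [T2Space X] [LocallyCompactSpace X] [LocallyConnectedSpace X]
    (h : IsTrappingNeighborhood f A Q) (hbasin : IsConnected (⋃ m : ℕ, f^[m] ⁻¹' interior Q)) :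
    IsConnected A := by
  have cont (m : ℕ) : Continuous f^[m] := f.continuous.iterate m
  have isOpen (m : ℕ) : IsOpen (f^[m] ⁻¹' interior Q) := isOpen_interior.preimage (cont m)
  have isCompact (m : ℕ) : IsCompact (f^[m] '' Q) := h.1.image (cont m)
  have hA : ⋂ m, f^[m] '' Q = A := h.2.2.2
  have hAc : IsCompact A := by
    refine h.1.of_isClosed_subset ?_ (h.2.1.trans interior_subset)
    exact hA ▸ isClosed_iInter fun m => (isCompact m).isClosed
  obtain ⟨L, hLW, hLc, hLconn, hAL⟩ := exists_isCompact_isConnected_superset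
    (isOpen_iUnion isOpen) hbasin hAc h.subset_iUnion_preimage_interior
  obtain ⟨m₀, hm₀⟩ := hLc.elim_directed_cover _ isOpen hLW
    h.monotone_preimage_interior.directed_le
  rw [← hA]
  refine isConnected_iInter_of_subset_of_subset (K := fun m => f^[m + m₀] '' L)
    h.antitone_image.directed_ge isCompact (fun m => hLconn.image _ (cont _).continuousOn)
    (fun m => ?_) fun m => ?_
  · rw [hA]
    exact (h.subset_image_iterate _).trans (Set.image_mono hAL)
  · rw [Function.iterate_add, Set.image_comp]
    exact Set.image_mono ((Set.image_subset_iff.2 hm₀).trans interior_subset)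

end IsTrappingNeighborhood

/-! ### Stable manifolds of hyperbolic points -/

section ModelMap

variable {n i : ℕ} {δu δs : ℝ}

/-- The projection of `ℝⁿ` onto the coordinates which are expanded by `modelMap n i`. -/
def unstableProj (n i : ℕ) :
    EuclideanSpace ℝ (Fin n) →ₗ[ℝ] ({j : Fin n // (j : ℕ) < i} → ℝ) :=
  LinearMap.funLeft ℝ ℝ Subtype.val ∘ₗ (WithLp.linearEquiv 2 ℝ (Fin n → ℝ)).toLinearMap

/-- The linear stable manifold `{0} × ℝⁿ⁻ⁱ` of `modelMap n i`. -/
def stableSubspace (n i : ℕ) : Submodule ℝ (EuclideanSpace ℝ (Fin n)) :=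
  LinearMap.ker (unstableProj n i)

lemma mem_stableSubspace {v : EuclideanSpace ℝ (Fin n)} :
    v ∈ stableSubspace n i ↔ ∀ j : Fin n, (j : ℕ) < i → v j = 0 :=
  LinearMap.mem_ker.trans <| funext_iff.trans Subtype.forall

lemma rank_quotient_stableSubspace (hin : i ≤ n) :
    Module.rank ℝ (EuclideanSpace ℝ (Fin n) ⧸ stableSubspace n i) = i := by
  have surjective : Function.Surjective (unstableProj n i) :=
    (LinearMap.funLeft_surjective_of_injective ℝ ℝ _ Subtype.val_injective).comp
      (WithLp.linearEquiv 2 ℝ (Fin n → ℝ)).surjective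
  rw [stableSubspace, ((unstableProj n i).quotKerEquivOfSurjective surjective).rank_eq,
    rank_fun', Fintype.card_fin_lt_of_le hin]

lemma abs_modelMap_apply (hu : δu = 1 ∨ δu = -1) (hs : δs = 1 ∨ δs = -1)
    (v : EuclideanSpace ℝ (Fin n)) (j : Fin n) :
    |modelMap n i δu δs v j| = (if (j : ℕ) < i then 2 else 1 / 2) * |v j| := by
  have hu : |δu| = 1 := by rcases hu with rfl | rfl <;> simp
  have hs : |δs| = 1 := by rcases hs with rfl | rfl <;> simp
  simp only [modelMap]
  split_ifs <;> simp [abs_mul, abs_div, hu, hs]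

lemma abs_modelMap_iterate_apply (hu : δu = 1 ∨ δu = -1) (hs : δs = 1 ∨ δs = -1)
    (v : EuclideanSpace ℝ (Fin n)) (j : Fin n) (k : ℕ) :
    |(modelMap n i δu δs)^[k] v j| = (if (j : ℕ) < i then 2 else 1 / 2) ^ k * |v j| := by
  induction k with
  | zero => simp
  | succ k ih =>
    rw [Function.iterate_succ_apply', abs_modelMap_apply hu hs, ih, pow_succ', mul_assoc]

lemma eq_zero_of_isFixedPt_modelMap (hu : δu = 1 ∨ δu = -1) (hs : δs = 1 ∨ δs = -1)
    {v : EuclideanSpace ℝ (Fin n)} (hv : Function.IsFixedPt (modelMap n i δu δs) v) : v = 0 := by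
  ext j
  have := abs_modelMap_apply (i := i) hu hs v j
  rw [hv.eq] at this
  refine abs_eq_zero.1 ?_
  split_ifs at this <;> linarith

lemma tendsto_modelMap_iterate_iff (hu : δu = 1 ∨ δu = -1) (hs : δs = 1 ∨ δs = -1)
    {v : EuclideanSpace ℝ (Fin n)} :
    Tendsto (fun k => (modelMap n i δu δs)^[k] v) atTop (𝓝 0) ↔ v ∈ stableSubspace n i := by
  rw [(PiLp.homeomorph 2 fun _ : Fin n => ℝ).isInducing.tendsto_nhds_iff, tendsto_pi_nhds,
    mem_stableSubspace]
  refine forall_congr' fun j => ?_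
  change Tendsto (fun k => (modelMap n i δu δs)^[k] v j) atTop (𝓝 0) ↔ _
  rw [tendsto_zero_iff_abs_tendsto_zero]
  simp only [Function.comp_def, abs_modelMap_iterate_apply hu hs]
  split_ifs with hj
  · simp only [hj, true_imp_iff]
    refine ⟨fun h => ?_, fun h => by simp [h]⟩
    have : |v j| ≤ 0 := ge_of_tendsto' h fun k =>
      le_mul_of_one_le_left (abs_nonneg _) (one_le_pow₀ one_le_two)
    exact abs_nonpos_iff.1 this
  · simp only [hj, false_imp_iff, iff_true]
    simpa using (tendsto_pow_atTop_nhds_zero_of_lt_one (r := (1 / 2 : ℝ)) (by norm_num)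
      (by norm_num)).mul_const |v j|

end ModelMap

section LocalStableManifolds

lemma setOf_tendsto_iterate_eq_iUnion {Y X : Type*} [TopologicalSpace Y] [TopologicalSpace X]
    {ψ : Y → X} (hψ : IsOpenEmbedding ψ) {a : Y → Y} {g : X → X} (h : Function.Semiconj ψ a g)
    (y : Y) :
    {x | Tendsto (fun k => g^[k] x) atTop (𝓝 (ψ y))} =
      ⋃ s : ℕ, g^[s] ⁻¹' (ψ '' {v | Tendsto (fun k => a^[k] v) atTop (𝓝 y)}) := by
  have tendsto_iff (v : Y) : Tendsto (fun k => g^[k] (ψ v)) atTop (𝓝 (ψ y)) ↔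
      Tendsto (fun k => a^[k] v) atTop (𝓝 y) := by
    simp only [← (h.iterate_right _).eq]
    exact hψ.isInducing.tendsto_nhds_iff.symm
  have shift (x : X) (s : ℕ) : Tendsto (fun k => g^[k] (g^[s] x)) atTop (𝓝 (ψ y)) ↔
      Tendsto (fun k => g^[k] x) atTop (𝓝 (ψ y)) := by
    simp only [← Function.iterate_add_apply]
    exact tendsto_add_atTop_iff_nat (f := fun k => g^[k] x) s
  refine Set.Subset.antisymm (fun x hx => ?_) (Set.iUnion_subset fun s x => ?_)
  · obtain ⟨s, v, hv⟩ := (hx.eventually (hψ.isOpen_range.mem_nhds ⟨y, rfl⟩)).exists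
    refine Set.mem_iUnion.2 ⟨s, v, ?_, hv⟩
    rw [Set.mem_ofPred_eq, ← tendsto_iff, hv, shift]
    exact hx
  · rintro ⟨v, hv, hvx⟩
    rw [Set.mem_ofPred_eq, ← shift x s, ← hvx, tendsto_iff]
    exact hv

lemma isOpenEmbedding_iterate {X : Type*} [TopologicalSpace X] {f : X → X}
    (hf : IsOpenEmbedding f) (t : ℕ) : IsOpenEmbedding f^[t] := by
  induction t with
  | zero => exact .id
  | succ t ih => exact ih.comp hf

variable {M : Type*} [MetricSpace M] {n i : ℕ} {f : M ≃ₜ M} {p : M}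

lemma TopHyperbolic.exists_semiconj (hp : TopHyperbolic n f p i) :
    ∃ δu δs : ℝ, (δu = 1 ∨ δu = -1) ∧ (δs = 1 ∨ δs = -1) ∧
      ∃ ψ : EuclideanSpace ℝ (Fin n) → M, IsOpenEmbedding ψ ∧ ψ 0 = p ∧
        Function.Semiconj ψ (modelMap n i δu δs) f^[Function.minimalPeriod f p] := by
  obtain ⟨m, -, hper, rfl, δu, δs, hu, hs, U, hU, hpU, h, hconj⟩ := hp
  have semiconj : Function.Semiconj (fun v => (h.symm v : M)) (modelMap n i δu δs)
      f^[Function.minimalPeriod f p] := fun v => by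
    rw [hconj, h.apply_symm_apply]
  have isOpenEmbedding := hU.isOpenEmbedding_subtypeVal.comp h.symm.isOpenEmbedding
  have fixed : Function.IsFixedPt (modelMap n i δu δs) (h ⟨p, hpU⟩) := by
    refine isOpenEmbedding.injective ((semiconj _).trans ?_)
    simp [hper.eq]
  refine ⟨δu, δs, hu, hs, _, isOpenEmbedding, ?_, semiconj⟩
  simp [← eq_zero_of_isFixedPt_modelMap hu hs fixed]

lemma TopHyperbolic.exists_stableSet_eq_iUnion (hp : TopHyperbolic n f p i) :
    ∃ φ : ℕ → EuclideanSpace ℝ (Fin n) → M, (∀ s, IsOpenEmbedding (φ s)) ∧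
      stableSet f p = ⋃ s, φ s '' stableSubspace n i := by
  obtain ⟨δu, δs, hu, hs, ψ, hψ, hψp, semiconj⟩ := hp.exists_semiconj
  set m := Function.minimalPeriod f p
  have stableSet_eq : stableSet f p = {x | Tendsto (fun k => (f^[m])^[k] x) atTop (𝓝 (ψ 0))} := by
    simp only [stableSet, hψp, ← Function.iterate_mul, mul_comm, m]
  have preimage_eq (s : ℕ) : (f^[m])^[s] ⁻¹' (ψ '' stableSubspace n i) =
      (fun v => f.symm^[m * s] (ψ v)) '' stableSubspace n i := by
    rw [← Set.image_image f.symm^[m * s] ψ, ← Function.iterate_mul]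
    exact (congrFun (Set.image_eq_preimage_of_inverse (iterate_iterate_symm_apply f _)
      (iterate_iterate_symm_apply f.symm _)) _).symm
  refine ⟨fun s v => f.symm^[m * s] (ψ v),
    fun s => (isOpenEmbedding_iterate f.symm.isOpenEmbedding _).comp hψ, ?_⟩
  rw [stableSet_eq, setOf_tendsto_iterate_eq_iUnion hψ semiconj]
  simp only [tendsto_modelMap_iterate_iff hu hs, ← preimage_eq]
  rfl

theorem TopHyperbolic.exists_isLocallyNonseparating_iUnion (hp : TopHyperbolic n f p i)
    (hi : 2 ≤ i) (hin : i ≤ n) :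
    ∃ C : ℕ → Set M, (∀ s, IsSigmaCompact (C s)) ∧ (∀ s, IsLocallyNonseparating (C s)) ∧
      stableSet f p = ⋃ s, C s := by
  obtain ⟨φ, hφ, hpφ⟩ := hp.exists_stableSet_eq_iUnion
  have codim : 1 < Module.rank ℝ (EuclideanSpace ℝ (Fin n) ⧸ stableSubspace n i) := by
    rw [rank_quotient_stableSubspace hin]
    exact_mod_cast hi
  have isSigmaCompact : IsSigmaCompact (stableSubspace n i : Set (EuclideanSpace ℝ (Fin n))) :=
    isSigmaCompact_univ.of_isClosed_subset (Submodule.closed_of_finiteDimensional _)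
      (Set.subset_univ _)
  exact ⟨fun s => φ s '' stableSubspace n i, fun s => isSigmaCompact.image (hφ s).continuous,
    fun s => (isLocallyNonseparating_submodule codim).image (hφ s), hpφ⟩

end LocalStableManifolds

/-! ### Ordered families of orbits -/

section Basins

variable {M : Type*} [MetricSpace M] [CompactSpace M] {f : M ≃ₜ M} {P Q : Set M}

lemma iUnion_preimage_interior_eq_compl_iUnion_stableSet (hf : (chainRecurrentSet f).Finite)
    (hPrec : P ⊆ chainRecurrentSet f)
    (hP : ∀ p ∈ P, ∀ q ∈ chainRecurrentSet f, ChainReachable f p q → q ∈ P)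
    (hQ : IsTrappingNeighborhood f (⋃ p ∈ P, unstableSet f p) Q) :
    ⋃ m : ℕ, f^[m] ⁻¹' interior Q = (⋃ p ∈ chainRecurrentSet f \ P, stableSet f p)ᶜ := by
  have periodic := chainRecurrentSet_subset_periodicPts hf
  have mem_interior {p : M} (hp : p ∈ P) : p ∈ interior Q :=
    hQ.2.1 (Set.mem_iUnion₂.2 ⟨p, hp, mem_unstableSet_self f p⟩)
  have mem_of_mem {p : M} (hp : p ∈ chainRecurrentSet f) (hpQ : p ∈ Q) : p ∈ P := by
    have forward : Set.MapsTo f Q Q := hQ.mapsTo.mono_right interior_subset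
    have backward (m : ℕ) : f.symm^[m] p ∈ Q := by
      have : f.symm^[m] p ∈ Function.periodicPts f :=
        periodicPts_symm f ▸ iterate_mem_periodicPts (periodicPts_symm f ▸ periodic hp) m
      exact mem_of_iterate_mem_of_mem_periodicPts forward this
        ((iterate_iterate_symm_apply f m p).symm ▸ hpQ)
    obtain ⟨q, hq, hqp⟩ := Set.mem_iUnion₂.1 (hQ.2.2.2 ▸ mem_iInter_iterate_image_iff.2 backward)
    exact hP q hq p hp (chainReachable_of_mem_unstableSet (periodic (hPrec hq)) hqp)
  ext x
  simp only [Set.mem_compl_iff, Set.mem_iUnion, Set.mem_preimage, exists_prop, not_exists, not_and]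
  constructor
  · rintro ⟨m, hm⟩ p ⟨hp, hpP⟩ hxp
    refine hpP (mem_of_mem hp (mem_of_mem_stableSet hxp hQ.1.isClosed ?_ (periodic hp)))
    filter_upwards [eventually_ge_atTop m] with t ht
    exact interior_subset (hQ.monotone_preimage_interior ht hm)
  · intro hx
    obtain ⟨p, hp, hxp⟩ := exists_mem_stableSet hf x
    have hpP : p ∈ P := by_contra fun hpP => hx p ⟨hp, hpP⟩ hxp
    by_contra! hxQ
    exact mem_of_mem_stableSet hxp isOpen_interior.isClosed_compl (.of_forall hxQ) (periodic hp)
      (mem_interior hpP)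

theorem isConnected_iUnion_unstableSet [ConnectedSpace M] [LocallyConnectedSpace M] {n : ℕ}
    (hf : (chainRecurrentSet f).Finite) (hPrec : P ⊆ chainRecurrentSet f)
    (hP : ∀ p ∈ P, ∀ q ∈ chainRecurrentSet f, ChainReachable f p q → q ∈ P)
    (hindex : ∀ p ∈ chainRecurrentSet f \ P, ∃ i, 2 ≤ i ∧ i ≤ n ∧ TopHyperbolic n f p i) :
    IsConnected (⋃ p ∈ P, unstableSet f p) := by
  obtain ⟨Q, hQ⟩ := exists_isTrappingNeighborhood_iUnion_unstableSet hf hPrec hP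
  have basin_eq := iUnion_preimage_interior_eq_compl_iUnion_stableSet hf hPrec hP hQ
  have isClosed : IsClosed (⋃ p ∈ chainRecurrentSet f \ P, stableSet f p) := by
    rw [← isOpen_compl_iff, ← basin_eq]
    exact isOpen_iUnion fun m => isOpen_interior.preimage (f.continuous.iterate m)
  refine hQ.isConnected (basin_eq ▸ ?_)
  have pieces (p : ↥(chainRecurrentSet f \ P)) : ∃ C : ℕ → Set M, (∀ s, IsSigmaCompact (C s)) ∧
      (∀ s, IsLocallyNonseparating (C s)) ∧ stableSet f p = ⋃ s, C s := by
    obtain ⟨i, hi, hin, hpi⟩ := hindex p p.2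
    exact hpi.exists_isLocallyNonseparating_iUnion hi hin
  choose C hCcompact hCsep hCeq using pieces
  have : Countable ↥(chainRecurrentSet f \ P) := (hf.subset Set.sdiff_subset).countable.to_subtype
  have iUnion_eq : ⋃ p ∈ chainRecurrentSet f \ P, stableSet f p = ⋃ a : _ × ℕ, C a.1 a.2 := by
    rw [Set.biUnion_eq_iUnion, Set.iUnion_prod']
    exact Set.iUnion_congr hCeq
  rw [iUnion_eq] at isClosed ⊢
  exact isConnected_compl_iUnion_of_isLocallyNonseparating isClosed
    (fun a => hCcompact a.1 a.2) fun a => hCsep a.1 a.2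

end Basins

section Orbits

variable {M : Type*} [MetricSpace M] {f : M ≃ₜ M}

lemma mapsTo_orbitOf (f : M ≃ₜ M) (p : M) : Set.MapsTo f (orbitOf f p) (orbitOf f p) := by
  rintro _ ⟨t, rfl⟩
  exact ⟨t + 1, Function.iterate_succ_apply' f t p⟩

lemma orbitOf_subset_periodicPts {p : M} (hp : p ∈ Function.periodicPts f) :
    orbitOf f p ⊆ Function.periodicPts f := by
  rintro _ ⟨t, rfl⟩
  exact iterate_mem_periodicPts hp t

lemma chainRecurrentSet_eq_iUnion_of_orbitOf [CompactSpace M] (hf : (chainRecurrentSet f).Finite)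
    {ι : Type*} {O : ι → Set M} (horb : ∀ l, ∃ p ∈ Function.periodicPts f, O l = orbitOf f p)
    (hcover : ∀ p ∈ Function.periodicPts f, ∃ l, p ∈ O l) :
    chainRecurrentSet f = ⋃ l, O l := by
  refine Set.Subset.antisymm (fun p hp => Set.mem_iUnion.2
    (hcover p (chainRecurrentSet_subset_periodicPts hf hp))) (Set.iUnion_subset fun l => ?_)
  obtain ⟨q, hq, hl⟩ := horb l
  exact hl ▸ (orbitOf_subset_periodicPts hq).trans (periodicPts_subset_chainRecurrentSet f)

variable {ι : Type*} [Preorder ι] {O : ι → Set M}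

lemma pairwise_disjoint_of_heteroclinic_lt
    (horder : ∀ l j, l ≠ j →
      ((⋃ p ∈ O j, unstableSet f p) ∩ ⋃ p ∈ O l, stableSet f p).Nonempty → l < j) :
    Pairwise fun l j => Disjoint (O l) (O j) := by
  refine fun l j hlj => Set.disjoint_left.2 fun p hl hj => ?_
  have lt {a b : ι} (hab : a ≠ b) (ha : p ∈ O a) (hb : p ∈ O b) : a < b :=
    horder a b hab ⟨p, Set.mem_iUnion₂.2 ⟨p, hb, mem_unstableSet_self f p⟩,
      Set.mem_iUnion₂.2 ⟨p, ha, mem_stableSet_self f p⟩⟩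
  exact lt_asymm (lt hlj hl hj) (lt hlj.symm hj hl)

lemma mem_biUnion_of_heteroclinic_lt {L : Set ι} (hL : IsLowerSet L)
    (horder : ∀ l j, l ≠ j →
      ((⋃ p ∈ O j, unstableSet f p) ∩ ⋃ p ∈ O l, stableSet f p).Nonempty → l < j)
    {p q : M} (hp : p ∈ ⋃ l ∈ L, O l) (hq : q ∈ ⋃ l, O l)
    (hpq : (unstableSet f p ∩ stableSet f q).Nonempty) : q ∈ ⋃ l ∈ L, O l := by
  obtain ⟨a, ha, hpa⟩ := Set.mem_iUnion₂.1 hp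
  obtain ⟨b, hqb⟩ := Set.mem_iUnion.1 hq
  refine Set.mem_iUnion₂.2 ⟨b, ?_, hqb⟩
  rcases eq_or_ne b a with rfl | hba
  · exact ha
  · obtain ⟨x, hxp, hxq⟩ := hpq
    exact hL (horder b a hba ⟨x, Set.mem_iUnion₂.2 ⟨p, hpa, hxp⟩,
      Set.mem_iUnion₂.2 ⟨q, hqb, hxq⟩⟩).le ha

end Orbits

theorem repeller_and_connected_attractor_general {n : ℕ} {M : Type*} [MetricSpace M]
    [CompactSpace M] [ConnectedSpace M] [LocallyConnectedSpace M] {f : M ≃ₜ M}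
    (hf : (chainRecurrentSet f).Finite) {ι : Type*} [Preorder ι] {O : ι → Set M}
    (horb : ∀ l, ∃ p ∈ Function.periodicPts f, O l = orbitOf f p)
    (hcover : ∀ p ∈ Function.periodicPts f, ∃ l, p ∈ O l)
    (horder : ∀ l j, l ≠ j →
      ((⋃ p ∈ O j, unstableSet f p) ∩ ⋃ p ∈ O l, stableSet f p).Nonempty → l < j)
    {L : Set ι} (hL : IsLowerSet L) :
    (∃ Q, IsTrappingNeighborhood f.symm (⋃ l ∈ Lᶜ, ⋃ p ∈ O l, stableSet f p) Q) ∧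
    ((∀ l ∈ Lᶜ, ∀ p ∈ O l, ∃ i, 2 ≤ i ∧ i ≤ n ∧ TopHyperbolic n f p i) →
      IsConnected (⋃ l ∈ L, ⋃ p ∈ O l, unstableSet f p)) := by
  have recurrent_eq := chainRecurrentSet_eq_iUnion_of_orbitOf hf horb hcover
  let P := ⋃ l ∈ L, O l
  have hPrec : P ⊆ chainRecurrentSet f := recurrent_eq ▸ Set.iUnion₂_subset_iUnion _ _
  have hPf : Set.MapsTo f P P := Set.mapsTo_iUnion₂_iUnion₂ fun l _ => by
    obtain ⟨q, -, hl⟩ := horb l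
    exact hl ▸ mapsTo_orbitOf f q
  have hP : ∀ p ∈ P, ∀ q ∈ chainRecurrentSet f, ChainReachable f p q → q ∈ P :=
    fun p hp q hq => mem_of_chainReachable_of_heteroclinic_closed hf hPf
      (fun p hp q hq => mem_biUnion_of_heteroclinic_lt hL horder hp (recurrent_eq ▸ hq))
      (hPrec hp) hp hq
  have sdiff_eq : chainRecurrentSet f \ P = ⋃ l ∈ Lᶜ, O l := by
    rw [recurrent_eq, ← Set.biUnion_univ, Set.biUnion_sdiff_biUnion_eq
      ((pairwise_disjoint_of_heteroclinic_lt horder).set_pairwise _), Set.compl_eq_univ_sdiff]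
  have iUnion_orbits (S : Set ι) (W : M → Set M) :
      ⋃ l ∈ S, ⋃ p ∈ O l, W p = ⋃ p ∈ ⋃ l ∈ S, O l, W p := by
    simp only [Set.biUnion_iUnion]
  rw [iUnion_orbits, iUnion_orbits, ← sdiff_eq]
  refine ⟨exists_isTrappingNeighborhood_iUnion_stableSet hf hP, fun hindex =>
    isConnected_iUnion_unstableSet (n := n) hf hPrec hP fun p hp => ?_⟩
  obtain ⟨l, hl, hpl⟩ := Set.mem_iUnion₂.1 (sdiff_eq ▸ hp)
  exact hindex l hl p hpl

/-- in the setting of Statement 8, `R_j = ⋃_{l > j} W^s_{O_l}` is a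
repeller of `f` (an attractor of `f⁻¹`), and if every periodic point of the orbits
`O_{j+1}, …, O_k` has Morse index at least `2`, then `A_j = ⋃_{l ≤ j} W^u_{O_l}` is
connected. (Orbits are indexed by `Fin k`; `A_j` corresponds to indices `(l : ℕ) < j`
and `R_j` to indices `(l : ℕ) ≥ j`.) -/
theorem repeller_and_connected_attractor {n : ℕ} (hn : 2 ≤ n) {M : Type*}
    [MetricSpace M] [CompactSpace M] [ConnectedSpace M] [Nonempty M]
    (hM : IsChartedEuclidean n M)
    (f : M ≃ₜ M) (hf : RegularHomeo n f)
    (k : ℕ) (O : Fin k → Set M)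
    (horb : ∀ l : Fin k, ∃ p : M,
      (∃ m : ℕ, 0 < m ∧ Function.IsPeriodicPt (⇑f) m p) ∧ O l = orbitOf f p)
    (hcover : ∀ p : M, (∃ m : ℕ, 0 < m ∧ Function.IsPeriodicPt (⇑f) m p) →
      ∃ l : Fin k, p ∈ O l)
    (hinj : Function.Injective O)
    (horder : ∀ l j : Fin k, l ≠ j →
      ((⋃ p ∈ O j, unstableSet f p) ∩ ⋃ p ∈ O l, stableSet f p).Nonempty →
        (l : ℕ) < (j : ℕ))
    (j : ℕ) (hj1 : 1 ≤ j) (hjk : j ≤ k - 1) :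
    (∃ Q : Set M, IsCompact Q ∧
      (⋃ (l : Fin k) (_ : j ≤ (l : ℕ)), ⋃ p ∈ O l, stableSet f p) ⊆ interior Q ∧
      f.symm '' Q ⊆ interior Q ∧
      (⋂ m : ℕ, (⇑f.symm)^[m] '' Q) =
        ⋃ (l : Fin k) (_ : j ≤ (l : ℕ)), ⋃ p ∈ O l, stableSet f p) ∧
    ((∀ p : M, (∃ l : Fin k, j ≤ (l : ℕ) ∧ p ∈ O l) →
        ∀ i : ℕ, TopHyperbolic n f p i → 2 ≤ i) →
      IsConnected (⋃ (l : Fin k) (_ : (l : ℕ) < j), ⋃ p ∈ O l, unstableSet f p)) := by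
  have := hM.locallyConnectedSpace
  obtain ⟨hfin, hhyp⟩ := hf
  have lowerSet : IsLowerSet {l : Fin k | (l : ℕ) < j} :=
    fun _ _ hle hlt => Set.mem_ofPred.2 (lt_of_le_of_lt (Fin.le_def.1 hle) (Set.mem_ofPred.1 hlt))
  obtain ⟨repeller, connected⟩ :=
    repeller_and_connected_attractor_general (n := n) hfin horb hcover horder lowerSet
  simp only [Set.mem_compl_iff, Set.mem_ofPred_eq, not_lt] at repeller connected
  refine ⟨repeller, fun hindex => connected fun l hl p hp => ?_⟩
  obtain ⟨i, hin, hpi⟩ := hhyp p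
    (chainRecurrentSet_eq_iUnion_of_orbitOf hfin horb hcover ▸ Set.mem_iUnion.2 ⟨l, hp⟩)
  exact ⟨i, hindex p ⟨l, hl, hp⟩ i hpi, hin, hpi⟩
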